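/- arXiv:1412.4338 — 4 statements merged into one kernel-verified Lean document; each statement's English description precedes it below -/
import Mathlib

section
/- For every real α ≥ 1 and every real z with 0 ≤ z < 1, one has z − z^(2α−1) ≤ (1 − 1/α) · (1 − z^(2α)). -/
/-!
For `z > 0`, pulling out the middle power `z ^ α` turns both differences into hyperbolic sines: with
`y = -α log z ≥ 0` and `c = 1 - 1 / α ∈ [0, 1]`, one has `z - z ^ (2α - 1) = 2 z ^ α sinh (c y)` and
`1 - z ^ (2α) = 2 z ^ α sinh y`. The inequality is then `sinh (c y) ≤ c sinh y`, which holds because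
`sinh` is convex on `[0, ∞)` and vanishes at `0`.
-/

open Real Set

theorem convexOn_sinh : ConvexOn ℝ (Ici 0) sinh := by
  refine MonotoneOn.convexOn_of_deriv (convex_Ici 0) continuous_sinh.continuousOn
    differentiable_sinh.differentiableOn ?_
  rw [Real.deriv_sinh]
  exact cosh_strictMonoOn.monotoneOn.mono interior_subset

theorem sinh_mul_le_mul_sinh {c y : ℝ} (hc₀ : 0 ≤ c) (hc₁ : c ≤ 1) (hy : 0 ≤ y) :
    sinh (c * y) ≤ c * sinh y := by
  simpa using convexOn_sinh.2 self_mem_Ici hy (sub_nonneg.2 hc₁) hc₀ (sub_add_cancel 1 c)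

theorem rpow_sub_sub_rpow_add_eq_sinh {x : ℝ} (hx : 0 < x) (a b : ℝ) :
    x ^ (a - b) - x ^ (a + b) = 2 * x ^ a * sinh (b * -log x) := by
  rw [mul_neg, sinh_neg, ← log_rpow hx, sinh_log (rpow_pos_of_pos hx b), rpow_sub hx, rpow_add hx]
  ring

theorem rpow_sub_sub_rpow_add_le {x : ℝ} (hx₀ : 0 < x) (hx₁ : x ≤ 1) (a : ℝ) {b c : ℝ}
    (hb : 0 ≤ b) (hc₀ : 0 ≤ c) (hc₁ : c ≤ 1) :
    x ^ (a - c * b) - x ^ (a + c * b) ≤ c * (x ^ (a - b) - x ^ (a + b)) := by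
  have hy : 0 ≤ b * -log x := mul_nonneg hb (neg_nonneg.2 (log_nonpos hx₀.le hx₁))
  calc
    x ^ (a - c * b) - x ^ (a + c * b) = 2 * x ^ a * sinh (c * (b * -log x)) := by
      rw [rpow_sub_sub_rpow_add_eq_sinh hx₀, mul_assoc c]
    _ ≤ 2 * x ^ a * (c * sinh (b * -log x)) := by
      gcongr
      exact sinh_mul_le_mul_sinh hc₀ hc₁ hy
    _ = c * (x ^ (a - b) - x ^ (a + b)) := by
      rw [rpow_sub_sub_rpow_add_eq_sinh hx₀]
      ring

/-- Key inequality in the proof of Lemma B.1(ii). -/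
theorem rpow_unit_interval_ineq (α z : ℝ) (hα : 1 ≤ α) (hz0 : 0 ≤ z) (hz1 : z < 1) :
    z - z ^ (2 * α - 1) ≤ (1 - 1 / α) * (1 - z ^ (2 * α)) := by
  have hα₀ : 0 < α := by linarith
  have hc₀ : 0 ≤ 1 - 1 / α := sub_nonneg.2 ((div_le_one hα₀).2 hα)
  have hc₁ : 1 - 1 / α ≤ 1 := sub_le_self 1 (by positivity)
  rcases hz0.eq_or_lt with rfl | hz
  · rw [zero_rpow (by linarith), zero_rpow (by linarith)]
    linarith
  · have h := rpow_sub_sub_rpow_add_le hz hz1.le α hα₀.le hc₀ hc₁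
    have hcα : (1 - 1 / α) * α = α - 1 := by field_simp
    rwa [hcα, sub_sub_cancel, rpow_one, sub_self, rpow_zero, ← add_sub_assoc, ← two_mul] at h
end

section
/- For all real numbers u, w ≥ 0, all real numbers p, q > 0, and every real α ≥ 1, one has (p·u^(2α−1) − q·w^(2α−1)) · (u/p − w/q) ≥ ((2α−1)/α²) · (u^α − w^α)² + ((u^(2α) + w^(2α))/2) · (p − q) · (1/p − 1/q) − (2(α−1)/α) · ((u^α + w^α)/2) · ((p+q)/2) · |u^α − w^α| · |1/p − 1/q|. -/
/-!
Put `a = u ^ (2α)`, `b = w ^ (2α)`, `t = 1 / (2α)` and `s = 1 - t`. The off-diagonal products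
`u ^ (2α - 1) * w` and `w ^ (2α - 1) * u` are the weighted geometric means `a ^ s * b ^ t` and
`a ^ t * b ^ s`, whose difference is at most `|s - t| * |a - b|`: in logarithmic coordinates this is
`sinh (θ x) ≤ θ sinh x` for `0 ≤ θ ≤ 1` and `0 ≤ x`, which holds because `sinh` is convex on
`[0, ∞)` and vanishes at `0`. Applied to `√a`, `√b` and squared, the same estimate bounds the sum of
the two means by `a + b - 4 s t (√a - √b) ^ 2`. Expanding the product on the right-hand side of the
inequality leaves one term in the sum of the two means and one in their difference.
-/

theorem convexOn_sinh_s7 : ConvexOn ℝ (Set.Ici 0) Real.sinh := by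
  refine MonotoneOn.convexOn_of_deriv (convex_Ici 0) Real.continuous_sinh.continuousOn
    Real.differentiable_sinh.differentiableOn ?_
  rw [Real.deriv_sinh]
  exact Real.cosh_strictMonoOn.monotoneOn.mono interior_subset

theorem abs_sinh_mul_le {θ : ℝ} (hθ : |θ| ≤ 1) (x : ℝ) :
    |Real.sinh (θ * x)| ≤ |θ| * |Real.sinh x| := by
  have h := convexOn_sinh_s7.2 (abs_nonneg x) Set.self_mem_Ici (abs_nonneg θ)
    (sub_nonneg.2 hθ) (add_sub_cancel _ _)
  simpa only [Real.abs_sinh, abs_mul, smul_eq_mul, mul_zero, add_zero, Real.sinh_zero] using h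

theorem exp_sub_exp_eq_two_mul_sinh (x y : ℝ) :
    Real.exp x - Real.exp y = 2 * Real.exp ((x + y) / 2) * Real.sinh ((x - y) / 2) := by
  rw [Real.sinh_eq, mul_comm 2, mul_assoc, mul_div_cancel₀ _ two_ne_zero, mul_sub,
    ← Real.exp_add, ← Real.exp_add]
  ring_nf

section WeightedGeometricMeans

variable {a b s t : ℝ}

theorem abs_rpow_mul_rpow_sub_le (ha : 0 ≤ a) (hb : 0 ≤ b) (hs : 0 ≤ s) (ht : 0 ≤ t)
    (hst : s + t = 1) : |a ^ s * b ^ t - a ^ t * b ^ s| ≤ |s - t| * |a - b| := by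
  obtain rfl | hs := hs.eq_or_lt
  · obtain rfl : t = 1 := by linarith
    simp [abs_sub_comm]
  obtain rfl | ht := ht.eq_or_lt
  · obtain rfl : s = 1 := by linarith
    simp
  obtain rfl | ha := ha.eq_or_lt
  · simpa [hs.ne', ht.ne'] using by positivity
  obtain rfl | hb := hb.eq_or_lt
  · simpa [hs.ne', ht.ne'] using by positivity
  obtain ⟨x, rfl⟩ : ∃ x, Real.exp x = a := ⟨_, Real.exp_log ha⟩
  obtain ⟨y, rfl⟩ : ∃ y, Real.exp y = b := ⟨_, Real.exp_log hb⟩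
  have hθ : |s - t| ≤ 1 := abs_le.2 ⟨by linarith, by linarith⟩
  have hmid : (x * s + y * t + (x * t + y * s)) / 2 = (x + y) / 2 := by
    linear_combination (x + y) / 2 * hst
  have hdiff : (x * s + y * t - (x * t + y * s)) / 2 = (s - t) * ((x - y) / 2) := by ring
  calc |Real.exp x ^ s * Real.exp y ^ t - Real.exp x ^ t * Real.exp y ^ s|
      = 2 * Real.exp ((x + y) / 2) * |Real.sinh ((s - t) * ((x - y) / 2))| := by
        simp only [← Real.exp_mul, ← Real.exp_add]
        rw [exp_sub_exp_eq_two_mul_sinh, hmid, hdiff, abs_mul, abs_of_pos (by positivity)]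
    _ ≤ 2 * Real.exp ((x + y) / 2) * (|s - t| * |Real.sinh ((x - y) / 2)|) := by
        gcongr
        exact abs_sinh_mul_le hθ _
    _ = |s - t| * |Real.exp x - Real.exp y| := by
        rw [exp_sub_exp_eq_two_mul_sinh, abs_mul (2 * _),
          abs_of_pos (by positivity : 0 < 2 * Real.exp ((x + y) / 2))]
        ring

/-- Since `4 * s * t = 1 - (s - t) ^ 2`, this bounds the Heinz mean of `a` and `b` by their Heron
mean with parameter `(s - t) ^ 2`. -/
theorem rpow_mul_rpow_add_le (ha : 0 ≤ a) (hb : 0 ≤ b) (hs : 0 ≤ s) (ht : 0 ≤ t)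
    (hst : s + t = 1) :
    a ^ s * b ^ t + a ^ t * b ^ s + 4 * s * t * (√a - √b) ^ 2 ≤ a + b := by
  have sq_sqrt_rpow {x : ℝ} (hx : 0 ≤ x) (r : ℝ) : (√x ^ r) ^ 2 = x ^ r := by
    rw [Real.rpow_pow_comm (Real.sqrt_nonneg x), Real.sq_sqrt hx]
  have sqrt_rpow_mul {x : ℝ} : √x ^ s * √x ^ t = √x := by
    rw [← Real.rpow_add_of_nonneg (Real.sqrt_nonneg x) hs ht, hst, Real.rpow_one]
  have hdiff : (√a ^ s * √b ^ t - √a ^ t * √b ^ s) ^ 2 ≤ (s - t) ^ 2 * (√a - √b) ^ 2 := by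
    rw [← mul_pow]
    exact sq_le_sq.2 ((abs_rpow_mul_rpow_sub_le (Real.sqrt_nonneg a) (Real.sqrt_nonneg b)
      hs ht hst).trans_eq (abs_mul _ _).symm)
  have hst' : (s - t) ^ 2 = 1 - 4 * s * t := by linear_combination (s + t + 1) * hst
  calc a ^ s * b ^ t + a ^ t * b ^ s + 4 * s * t * (√a - √b) ^ 2
      = (√a ^ s * √b ^ t - √a ^ t * √b ^ s) ^ 2 + 2 * (√a ^ s * √a ^ t) * (√b ^ s * √b ^ t)
          + 4 * s * t * (√a - √b) ^ 2 := by
        simp only [← sq_sqrt_rpow ha, ← sq_sqrt_rpow hb]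
        ring
    _ ≤ (1 - 4 * s * t) * (√a - √b) ^ 2 + 2 * √a * √b + 4 * s * t * (√a - √b) ^ 2 := by
        rw [sqrt_rpow_mul, sqrt_rpow_mul, ← hst']
        gcongr
    _ = √a ^ 2 + √b ^ 2 := by ring
    _ = a + b := by rw [Real.sq_sqrt ha, Real.sq_sqrt hb]

end WeightedGeometricMeans

section OffDiagonal

variable {u w α : ℝ}

theorem rpow_rpow_one_sub_inv {x β : ℝ} (hx : 0 ≤ x) (hβ : β ≠ 0) :
    (x ^ β) ^ (1 - β⁻¹) = x ^ (β - 1) := by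
  rw [← Real.rpow_mul hx, mul_sub, mul_one, mul_inv_cancel₀ hβ]

theorem sqrt_rpow_two_mul {x : ℝ} (hx : 0 ≤ x) (r : ℝ) : √(x ^ (2 * r)) = x ^ r := by
  rw [mul_comm, Real.rpow_mul hx, Real.rpow_two, Real.sqrt_sq (Real.rpow_nonneg hx r)]

theorem abs_rpow_mul_sub_rpow_mul_le (hu : 0 ≤ u) (hw : 0 ≤ w) (hα : 1 / 2 ≤ α) :
    |u ^ (2 * α - 1) * w - w ^ (2 * α - 1) * u| ≤
      |α - 1| / α * |u ^ (2 * α) - w ^ (2 * α)| := by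
  have hα₀ : 0 < α := by linarith
  have hβ : 2 * α ≠ 0 := by positivity
  have hβ' : (2 * α)⁻¹ ≤ 1 := inv_le_one_of_one_le₀ (by linarith)
  have h := abs_rpow_mul_rpow_sub_le (Real.rpow_nonneg hu (2 * α)) (Real.rpow_nonneg hw (2 * α))
    (sub_nonneg.2 hβ') (by positivity) (sub_add_cancel _ _)
  have hθ : 1 - (2 * α)⁻¹ - (2 * α)⁻¹ = (α - 1) / α := by field_simp; ring
  rwa [rpow_rpow_one_sub_inv hu hβ, rpow_rpow_one_sub_inv hw hβ, Real.rpow_rpow_inv hu hβ,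
    Real.rpow_rpow_inv hw hβ, hθ, abs_div, abs_of_pos hα₀, mul_comm u] at h

theorem rpow_mul_add_rpow_mul_le (hu : 0 ≤ u) (hw : 0 ≤ w) (hα : 1 / 2 ≤ α) :
    u ^ (2 * α - 1) * w + w ^ (2 * α - 1) * u + (2 * α - 1) / α ^ 2 * (u ^ α - w ^ α) ^ 2 ≤
      u ^ (2 * α) + w ^ (2 * α) := by
  have hα₀ : α ≠ 0 := by rintro rfl; norm_num at hα
  have hβ : 2 * α ≠ 0 := mul_ne_zero two_ne_zero hα₀
  have hβ' : (2 * α)⁻¹ ≤ 1 := inv_le_one_of_one_le₀ (by linarith)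
  have h := rpow_mul_rpow_add_le (Real.rpow_nonneg hu (2 * α)) (Real.rpow_nonneg hw (2 * α))
    (sub_nonneg.2 hβ') (inv_nonneg.2 (by linarith)) (sub_add_cancel _ _)
  have hcoeff : 4 * (1 - (2 * α)⁻¹) * (2 * α)⁻¹ = (2 * α - 1) / α ^ 2 := by field_simp; ring
  rwa [rpow_rpow_one_sub_inv hu hβ, rpow_rpow_one_sub_inv hw hβ, Real.rpow_rpow_inv hu hβ,
    Real.rpow_rpow_inv hw hβ, hcoeff, sqrt_rpow_two_mul hu, sqrt_rpow_two_mul hw,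
    mul_comm u] at h

end OffDiagonal

theorem sub_mul_one_div_sub_one_div_nonpos {p q : ℝ} (hp : 0 < p) (hq : 0 < q) :
    (p - q) * (1 / p - 1 / q) ≤ 0 := by
  have h : (p - q) * (1 / p - 1 / q) = -((p - q) ^ 2 / (p * q)) := by field_simp; ring
  rw [h]
  exact neg_nonpos.2 (by positivity)

theorem le_mul_sub_mul_mul_div_sub_div {p q u w x y C D : ℝ} (hp : 0 < p) (hq : 0 < q)
    (hC : 0 ≤ C) (hsum : x * w + y * u + C ≤ x * u + y * w) (hdiff : |x * w - y * u| ≤ D) :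
    C + (x * u + y * w) / 2 * ((p - q) * (1 / p - 1 / q)) -
        (p + q) / 2 * |1 / p - 1 / q| * D ≤
      (p * x - q * y) * (u / p - w / q) := by
  set δ := (p - q) * (1 / p - 1 / q) with hδ
  have hδ₀ : δ ≤ 0 := sub_mul_one_div_sub_one_div_nonpos hp hq
  have hsplit : (p * x - q * y) * (u / p - w / q) =
      (x * u + y * w) - (x * w + y * u) + (x * w + y * u) / 2 * δ +
        (p + q) / 2 * ((1 / p - 1 / q) * (x * w - y * u)) := by
    rw [hδ]
    field_simp
    ring
  have hsymm : (x * u + y * w) / 2 * δ ≤ (x * w + y * u) / 2 * δ :=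
    mul_le_mul_of_nonpos_right (by linarith) hδ₀
  have hanti : -((p + q) / 2 * |1 / p - 1 / q| * D) ≤
      (p + q) / 2 * ((1 / p - 1 / q) * (x * w - y * u)) := by
    rw [mul_assoc, ← mul_neg]
    gcongr
    calc -(|1 / p - 1 / q| * D) ≤ -(|1 / p - 1 / q| * |x * w - y * u|) := by gcongr
      _ = -|(1 / p - 1 / q) * (x * w - y * u)| := by rw [abs_mul]
      _ ≤ (1 / p - 1 / q) * (x * w - y * u) := neg_abs_le _
  linarith

theorem per_edge_lower_bound_general (u w p q α : ℝ) (hu : 0 ≤ u) (hw : 0 ≤ w)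
    (hp : 0 < p) (hq : 0 < q) (hα : 1 / 2 ≤ α) :
    ((2 * α - 1) / α ^ 2) * (u ^ α - w ^ α) ^ 2 +
        ((u ^ (2 * α) + w ^ (2 * α)) / 2) * (p - q) * (1 / p - 1 / q) -
        (2 * |α - 1| / α) * ((u ^ α + w ^ α) / 2) * ((p + q) / 2) *
          |u ^ α - w ^ α| * |1 / p - 1 / q|
      ≤ (p * u ^ (2 * α - 1) - q * w ^ (2 * α - 1)) * (u / p - w / q) := by
  have rpow_sub_one_mul {x : ℝ} (hx : 0 ≤ x) : x ^ (2 * α - 1) * x = x ^ (2 * α) := by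
    rw [← Real.rpow_add_one' hx (by linarith), sub_add_cancel]
  have habs : |u ^ (2 * α) - w ^ (2 * α)| = (u ^ α + w ^ α) * |u ^ α - w ^ α| := by
    rw [mul_comm 2 α, Real.rpow_mul hu, Real.rpow_mul hw, Real.rpow_two, Real.rpow_two, sq_sub_sq,
      abs_mul, abs_of_nonneg (by positivity)]
  have hC : 0 ≤ (2 * α - 1) / α ^ 2 * (u ^ α - w ^ α) ^ 2 :=
    mul_nonneg (div_nonneg (by linarith) (sq_nonneg α)) (sq_nonneg _)
  have h := le_mul_sub_mul_mul_div_sub_div hp hq hC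
    (by simpa only [rpow_sub_one_mul hu, rpow_sub_one_mul hw] using
      rpow_mul_add_rpow_mul_le hu hw hα)
    (abs_rpow_mul_sub_rpow_mul_le hu hw hα)
  rw [rpow_sub_one_mul hu, rpow_sub_one_mul hw, habs] at h
  convert h using 1
  ring

/-- The per-edge inequality (2.11) in the proof of Lemma 2.2 of the paper. -/
theorem per_edge_lower_bound (u w p q α : ℝ) (hu : 0 ≤ u) (hw : 0 ≤ w)
    (hp : 0 < p) (hq : 0 < q) (hα : 1 ≤ α) :
    ((2 * α - 1) / α ^ 2) * (u ^ α - w ^ α) ^ 2 +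
        ((u ^ (2 * α) + w ^ (2 * α)) / 2) * (p - q) * (1 / p - 1 / q) -
        (2 * (α - 1) / α) * ((u ^ α + w ^ α) / 2) * ((p + q) / 2) *
          |u ^ α - w ^ α| * |1 / p - 1 / q|
      ≤ (p * u ^ (2 * α - 1) - q * w ^ (2 * α - 1)) * (u / p - w / q) := by
  simpa only [abs_of_nonneg (sub_nonneg.2 hα)] using
    per_edge_lower_bound_general u w p q α hu hw hp hq (by linarith)
end

section
/- For every real s with 0 < s ≤ 3, one has (√(1 + s²) − 1)/s − log(s + √(1 + s²)) ≤ −s/20. -/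
/-!
Put `s = sinh t` with `t > 0`. Then `(√(1 + s ^ 2) - 1) / s = tanh (t / 2)` and
`log (s + √(1 + s ^ 2)) = t`, so `tanh (t / 2) ≤ t / 2`, which is
`2 * (x - 1) / (x + 1) ≤ log x` at `x = exp t`, gives
`F(s) = tanh (t / 2) - t ≤ -tanh (t / 2) = -s / (1 + √(1 + s ^ 2))`. The last denominator is
bounded for bounded `s`.
-/

theorem sqrt_one_add_sq_sub_one_div (s : ℝ) :
    (√(1 + s ^ 2) - 1) / s = s / (1 + √(1 + s ^ 2)) := by
  rcases eq_or_ne s 0 with rfl | hs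
  · simp
  · have hsq : √(1 + s ^ 2) ^ 2 = 1 + s ^ 2 := Real.sq_sqrt (by positivity)
    rw [div_eq_div_iff hs (by positivity)]
    linear_combination hsq

theorem two_mul_div_one_add_sqrt_le_arsinh {s : ℝ} (hs : 0 ≤ s) :
    2 * s / (1 + √(1 + s ^ 2)) ≤ Real.arsinh s := by
  have hsq : √(1 + s ^ 2) ^ 2 = 1 + s ^ 2 := Real.sq_sqrt (by positivity)
  have hone : 1 ≤ √(1 + s ^ 2) := Real.one_le_sqrt.2 (by nlinarith)
  set r := √(1 + s ^ 2)
  calc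
    2 * s / (1 + r) = 2 * (s + r - 1) / (s + r - 1 + 2) := by
      rw [div_eq_div_iff (by positivity) (by linarith)]
      linear_combination -2 * hsq
    _ ≤ Real.log (1 + (s + r - 1)) := Real.le_log_one_add_of_nonneg (by linarith)
    _ = Real.arsinh s := by rw [add_sub_cancel, Real.arsinh]

theorem F_gaussian_regime_general (s : ℝ) (hs : 0 < s) :
    (√(1 + s ^ 2) - 1) / s - Real.log (s + √(1 + s ^ 2)) ≤ -s / (1 + √(1 + s ^ 2)) := by
  have harsinh := two_mul_div_one_add_sqrt_le_arsinh hs.le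
  rw [Real.arsinh, mul_div_assoc] at harsinh
  rw [sqrt_one_add_sq_sub_one_div, neg_div]
  linarith

/-- Gaussian-regime upper bound for `F(s)`. -/
theorem F_gaussian_regime (s : ℝ) (hs : 0 < s) (hs3 : s ≤ 3) :
    (Real.sqrt (1 + s ^ 2) - 1) / s - Real.log (s + Real.sqrt (1 + s ^ 2)) ≤ -s / 20 := by
  have hsqrt : √(1 + s ^ 2) ≤ 19 := Real.sqrt_le_iff.2 ⟨by norm_num, by nlinarith⟩
  exact (F_gaussian_regime_general s hs).trans (by rw [neg_div, neg_div]; gcongr; linarith)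
end

section
/- Let V be a nonempty finite type, ω : V → V → ℝ symmetric with ω x y ≥ 0 and ω x x = 0, and μ(x) = ∑_y ω x y with μ(x) > 0 for all x. Let φ : V → ℝ be strictly positive and let h ∈ ℝ satisfy φ(x)/φ(y) + φ(y)/φ(x) − 2 ≤ h whenever ω x y > 0. Suppose v : ℝ → V → ℝ is such that for every x and every t ≥ 0, the map t ↦ v t x has derivative (𝓛_φ (v t))(x) at t, where (𝓛_φ g)(x) = φ(x) · μ(x)⁻¹ · ∑_y ω x y · (g(y)/φ(y) − g(x)/φ(x)). Then for every t ≥ 0, ∑_x μ(x) · (v t x)² ≤ exp(2·h·t) · ∑_x μ(x) · (v 0 x)². -/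
/-!
Let `E(t) = ∑ x, μ x * v t x ^ 2`. Symmetrising in the two endpoints of an edge writes `E'` as a sum
of `ω x y * ((c + 2) * g x * g y - g x ^ 2 - g y ^ 2)` over all pairs, where `g = v t` and
`c = φ x / φ y + φ y / φ x - 2`. As `c ≥ 0`, completing the square bounds each summand by
`ω x y * c * (g x ^ 2 + g y ^ 2) / 2`, so only the mean of `c` around each vertex enters. If it is
at most `h`, then `E' ≤ h * E`, and Grönwall's inequality yields the factor `exp (h * t)`; `c ≥ 0`
allows `2 * h` in place of `h`.
-/

open Finset Set

theorem le_mul_exp_of_hasDerivWithinAt_le {f f' : ℝ → ℝ} {K a b : ℝ} (hab : a ≤ b)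
    (hf : ContinuousOn f (Icc a b))
    (hf' : ∀ s ∈ Ico a b, HasDerivWithinAt f (f' s) (Ici s) s)
    (bound : ∀ s ∈ Ico a b, f' s ≤ K * f s) :
    f b ≤ f a * Real.exp (K * (b - a)) := by
  rw [← gronwallBound_ε0]
  exact le_gronwallBound_of_liminf_deriv_right_le hf
    (fun s hs _ hr => (hf' s hs).liminf_right_slope_le hr) le_rfl
    (fun s hs => (bound s hs).trans_eq (add_zero _).symm) b (right_mem_Icc.2 hab)

theorem sum_sum_le_sum_sum_of_add_swap_le {ι R : Type*} [Fintype ι] [Semiring R]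
    [LinearOrder R] [IsStrictOrderedRing R] {F G : ι → ι → R}
    (hFG : ∀ x y, F x y + F y x ≤ G x y + G y x) :
    ∑ x, ∑ y, F x y ≤ ∑ x, ∑ y, G x y := by
  have two_mul_sum_sum (H : ι → ι → R) :
      2 * ∑ x, ∑ y, H x y = ∑ x, ∑ y, (H x y + H y x) := by
    simp only [sum_add_distrib]
    rw [sum_comm (f := fun x y => H y x), two_mul]
  refine le_of_mul_le_mul_left ?_ (zero_lt_two' R)
  rw [two_mul_sum_sum, two_mul_sum_sum]
  exact sum_le_sum fun x _ => sum_le_sum fun y _ => hFG x y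

section Tilting

variable {V : Type*}

/-- The distortion of the weight `φ` along a pair of vertices; its maximum over the edges is the
paper's `h(φ)`. -/
noncomputable def tiltDistortion (φ : V → ℝ) (x y : V) : ℝ :=
  φ x / φ y + φ y / φ x - 2

/-- The conjugated generator `g ↦ φ · 𝓛(g / φ)`, where `𝓛` is the generator of the random walk with
conductances `ω` and speed measure `μ`; the constant-speed walk has `μ x = ∑ y, ω x y`. -/
noncomputable def tiltedGenerator [Fintype V] (ω : V → V → ℝ) (μ φ g : V → ℝ) (x : V) : ℝ :=
  φ x * (μ x)⁻¹ * ∑ y, ω x y * (g y / φ y - g x / φ x)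

theorem tiltDistortion_comm (φ : V → ℝ) (x y : V) :
    tiltDistortion φ x y = tiltDistortion φ y x := by
  simp only [tiltDistortion, add_comm]

variable {φ : V → ℝ}

theorem tiltDistortion_nonneg {x y : V} (hx : 0 < φ x) (hy : 0 < φ y) :
    0 ≤ tiltDistortion φ x y := by
  have eq_sq_div : tiltDistortion φ x y = (φ x - φ y) ^ 2 / (φ x * φ y) := by
    unfold tiltDistortion
    field_simp
    ring
  rw [eq_sq_div]
  positivity

theorem tilted_edge_flow_le {x y : V} (hx : 0 < φ x) (hy : 0 < φ y) (g : V → ℝ) :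
    g x * φ x * (g y / φ y - g x / φ x) + g y * φ y * (g x / φ x - g y / φ y) ≤
      tiltDistortion φ x y * ((g x ^ 2 + g y ^ 2) / 2) := by
  calc
    _ = tiltDistortion φ x y * (g x * g y) - (g x - g y) ^ 2 := by
      unfold tiltDistortion
      field_simp
      ring
    _ ≤ tiltDistortion φ x y * (g x * g y) := sub_le_self _ (sq_nonneg _)
    _ ≤ tiltDistortion φ x y * ((g x ^ 2 + g y ^ 2) / 2) :=
      mul_le_mul_of_nonneg_left (by linarith [two_mul_le_add_sq (g x) (g y)])
        (tiltDistortion_nonneg hx hy)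

variable [Fintype V] {ω : V → V → ℝ}

theorem two_mul_sum_mul_tiltedGenerator_le {μ : V → ℝ} (hsym : ∀ x y, ω x y = ω y x)
    (hnn : ∀ x y, 0 ≤ ω x y) (hμ : ∀ x, μ x ≠ 0) (hφ : ∀ x, 0 < φ x) (g : V → ℝ) :
    2 * ∑ x, μ x * (g x * tiltedGenerator ω μ φ g x) ≤
      ∑ x, (∑ y, ω x y * tiltDistortion φ x y) * g x ^ 2 := by
  let flow (x y : V) : ℝ := g x * φ x * (g y / φ y - g x / φ x)
  have speed_cancels (x : V) :
      μ x * (g x * tiltedGenerator ω μ φ g x) = ∑ y, ω x y * flow x y := by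
    have := hμ x
    simp only [tiltedGenerator, flow, mul_left_comm (ω x _), ← mul_sum]
    field_simp
  have edgewise (x y : V) :
      2 * (ω x y * flow x y) + 2 * (ω y x * flow y x) ≤
        ω x y * tiltDistortion φ x y * g x ^ 2 + ω y x * tiltDistortion φ y x * g y ^ 2 := by
    rw [← hsym x y, tiltDistortion_comm φ y x]
    linarith [mul_le_mul_of_nonneg_left (tilted_edge_flow_le (hφ x) (hφ y) g) (hnn x y)]
  simp only [speed_cancels, mul_sum, sum_mul]
  exact sum_sum_le_sum_sum_of_add_swap_le edgewise

theorem sum_mul_tiltDistortion_le {h : ℝ} {x : V} (hnn : ∀ y, 0 ≤ ω x y)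
    (hh : ∀ y, 0 < ω x y → tiltDistortion φ x y ≤ h) :
    ∑ y, ω x y * tiltDistortion φ x y ≤ h * ∑ y, ω x y := by
  rw [mul_comm, sum_mul]
  refine sum_le_sum fun y _ => ?_
  rcases (hnn y).eq_or_lt with no_edge | edge
  · simp only [← no_edge, zero_mul, le_refl]
  · exact mul_le_mul_of_nonneg_left (hh y edge) edge.le

theorem sum_mul_tiltDistortion_nonneg {x : V} (hnn : ∀ y, 0 ≤ ω x y) (hφ : ∀ y, 0 < φ y) :
    0 ≤ ∑ y, ω x y * tiltDistortion φ x y :=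
  sum_nonneg fun y _ => mul_nonneg (hnn y) (tiltDistortion_nonneg (hφ x) (hφ y))

end Tilting

theorem hasDerivWithinAt_sum_mul_sq {V : Type*} [Fintype V] (μ : V → ℝ) {v : ℝ → V → ℝ}
    {v' : V → ℝ} {s : Set ℝ} {t : ℝ}
    (hv : ∀ x, HasDerivWithinAt (fun r => v r x) (v' x) s t) :
    HasDerivWithinAt (fun r => ∑ x, μ x * v r x ^ 2) (2 * ∑ x, μ x * (v t x * v' x)) s t := by
  rw [mul_sum]
  refine HasDerivWithinAt.fun_sum fun x _ => (((hv x).fun_pow 2).const_mul (μ x)).congr_deriv ?_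
  push_cast
  ring

theorem tilted_csrw_apriori_general {V : Type*} [Fintype V]
    (ω : V → V → ℝ) (hsym : ∀ x y, ω x y = ω y x) (hnn : ∀ x y, 0 ≤ ω x y)
    (μ : V → ℝ) (hμ : ∀ x, μ x ≠ 0)
    (φ : V → ℝ) (hφ : ∀ x, 0 < φ x)
    (h : ℝ) (hh : ∀ x, ∑ y, ω x y * tiltDistortion φ x y ≤ h * μ x)
    (v : ℝ → V → ℝ)
    (hv : ∀ x, ∀ t : ℝ, 0 ≤ t →
      HasDerivWithinAt (fun s => v s x) (tiltedGenerator ω μ φ (v t) x) (Ici 0) t)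
    (t : ℝ) (ht : 0 ≤ t) :
    ∑ x, μ x * v t x ^ 2 ≤ Real.exp (h * t) * ∑ x, μ x * v 0 x ^ 2 := by
  have energy_deriv (s : ℝ) (hs : 0 ≤ s) := hasDerivWithinAt_sum_mul_sq μ fun x => hv x s hs
  have energy_deriv_le (s : ℝ) :
      2 * ∑ x, μ x * (v s x * tiltedGenerator ω μ φ (v s) x) ≤ h * ∑ x, μ x * v s x ^ 2 := by
    refine (two_mul_sum_mul_tiltedGenerator_le hsym hnn hμ hφ (v s)).trans ?_
    simp only [mul_sum, ← mul_assoc]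
    gcongr with x
    exact hh x
  have gronwall := le_mul_exp_of_hasDerivWithinAt_le ht
    (fun s hs => (energy_deriv s hs.1).continuousWithinAt.mono Icc_subset_Ici_self)
    (fun s hs => (energy_deriv s hs.1).mono (Ici_subset_Ici.2 hs.1))
    (fun s _ => energy_deriv_le s)
  rwa [sub_zero, mul_comm] at gronwall

open Finset in
/-- A-priori estimate (Lemma 2.1): `‖v_t‖²_{ℓ²(V,μ)} ≤ e^{2ht} ‖v_0‖²_{ℓ²(V,μ)}`
for solutions of the tilted CSRW heat equation on a finite weighted graph. -/
theorem tilted_csrw_apriori {V : Type*} [Fintype V] [Nonempty V]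
    (ω : V → V → ℝ) (hsym : ∀ x y, ω x y = ω y x) (hnn : ∀ x y, 0 ≤ ω x y)
    (hdiag : ∀ x, ω x x = 0)
    (μ : V → ℝ) (hμ : ∀ x, μ x = ∑ y, ω x y) (hμpos : ∀ x, 0 < μ x)
    (φ : V → ℝ) (hφ : ∀ x, 0 < φ x)
    (h : ℝ) (hh : ∀ x y, 0 < ω x y → φ x / φ y + φ y / φ x - 2 ≤ h)
    (v : ℝ → V → ℝ)
    (hv : ∀ x, ∀ t : ℝ, 0 ≤ t →
      HasDerivAt (fun s => v s x)
        (φ x * (μ x)⁻¹ * ∑ y, ω x y * (v t y / φ y - v t x / φ x)) t)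
    (t : ℝ) (ht : 0 ≤ t) :
    ∑ x, μ x * v t x ^ 2 ≤ Real.exp (2 * h * t) * ∑ x, μ x * v 0 x ^ 2 := by
  have mean_le (x : V) : ∑ y, ω x y * tiltDistortion φ x y ≤ 2 * h * μ x := by
    linarith [sum_mul_tiltDistortion_nonneg (hnn x) hφ,
      hμ x ▸ sum_mul_tiltDistortion_le (hnn x) (hh x)]
  exact tilted_csrw_apriori_general ω hsym hnn μ (fun x => (hμpos x).ne') φ hφ (2 * h) mean_le v
    (fun x s hs => (hv x s hs).hasDerivWithinAt) t ht
end
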